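/- arXiv:2603.16547 — 3 statements merged into one kernel-verified Lean document; each statement's English description precedes it below -/
import Mathlib

section
/- Let y_1, …, y_m be real numbers with |y_i| ≤ 1 for every i and Σ_{i=1}^m y_i = 0. Then there exists a permutation τ of {1,…,m} such that for every p ∈ {1,…,m} the partial sum Σ_{k=1}^p y_{τ(k)} satisfies |Σ_{k=1}^p y_{τ(k)}| ≤ 1. -/
theorem balancing_aux (m : ℕ) : ∀ (y : Fin m → ℝ) (c : ℝ),
    (∀ i, |y i| ≤ 1) → |c| ≤ 1 → c + ∑ i, y i = 0 →
    ∃ τ : Equiv.Perm (Fin m), ∀ p : ℕ,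
      |c + ∑ k : Fin m, if (k : ℕ) < p then y (τ k) else 0| ≤ 1 := by
  induction m with
  | zero =>
    intro y c _ hc _
    exact ⟨1, fun p => by simpa using hc⟩
  | succ m ih =>
    intro y c hy hc hsum
    have hpick : ∃ i, |c + y i| ≤ 1 := by
      rw [abs_le] at hc
      rcases le_total 0 c with h | h
      · have : ∃ i, y i ≤ 0 := by
          by_contra! hn
          have := Finset.sum_pos (fun i _ => hn i) (Finset.univ_nonempty (α := Fin (m+1)))
          linarith
        obtain ⟨i, hi⟩ := this
        have := abs_le.1 (hy i)
        exact ⟨i, abs_le.2 ⟨by linarith, by linarith⟩⟩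
      · have : ∃ i, 0 ≤ y i := by
          by_contra! hn
          have := Finset.sum_neg (fun i _ => hn i) (Finset.univ_nonempty (α := Fin (m+1)))
          linarith
        obtain ⟨i, hi⟩ := this
        have := abs_le.1 (hy i)
        exact ⟨i, abs_le.2 ⟨by linarith, by linarith⟩⟩
    obtain ⟨i, hi⟩ := hpick
    have hs : c + y i + ∑ k : Fin m, y (Equiv.swap 0 i k.succ) = 0 := by
      rw [← Equiv.sum_comp (Equiv.swap 0 i) y, Fin.sum_univ_succ, Equiv.swap_apply_left] at hsum
      linarith
    obtain ⟨τ, hτ⟩ := ih (fun k => y (Equiv.swap 0 i k.succ)) (c + y i) (fun k => hy _) hi hs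
    refine ⟨Equiv.Perm.decomposeFin.symm (i, τ), fun p => ?_⟩
    cases p with
    | zero => simpa using hc
    | succ p =>
      rw [Fin.sum_univ_succ]
      simpa [add_assoc] using hτ p

/-- **One-dimensional balancing lemma.** Real numbers `y₁, …, y_m` with `|yᵢ| ≤ 1`
summing to zero can be reordered so that every partial sum lies in `[-1, 1]`. -/
theorem one_dim_balancing (m : ℕ) (y : Fin m → ℝ)
    (hy : ∀ i, |y i| ≤ 1) (hsum : ∑ i, y i = 0) :
    ∃ τ : Equiv.Perm (Fin m), ∀ p : ℕ, 1 ≤ p → p ≤ m →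
      |∑ k ∈ Finset.univ.filter (fun k : Fin m => (k : ℕ) < p), y (τ k)| ≤ 1 := by
  obtain ⟨τ, hτ⟩ := balancing_aux m y 0 hy (by simp) (by simpa using hsum)
  refine ⟨τ, fun p _ _ => ?_⟩
  rw [Finset.sum_filter]
  simpa only [zero_add] using hτ p
end

section
/- Let v_1, …, v_n be vectors in ℝ² with ‖v_i‖ ≤ 1 for every i and with Σ_{i=1}^n v_i = 0. Then there exists a permutation σ of {1,…,n} such that for every p ∈ {1,…,n} the partial sum S_p = Σ_{k=1}^p v_{σ(k)} satisfies ‖S_p‖ ≤ 2. -/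
namespace SteinitzAux

abbrev Pl := EuclideanSpace ℝ (Fin 2)

/-- The polytope of coefficient vectors supported on `A`. -/
def poly {ι : Type} [Fintype ι] (v : ι → Pl) (A : Finset ι) (c : ℝ) : Set (ι → ℝ) :=
  {μ | (∀ i, 0 ≤ μ i) ∧ (∀ i, μ i ≤ 1) ∧ (∀ i, i ∉ A → μ i = 0) ∧ ∑ i, μ i = c ∧
    ∑ i, μ i • v i = 0}

lemma poly_compact {ι : Type} [Fintype ι] (v : ι → Pl) (A : Finset ι) (c : ℝ) :
    IsCompact (poly v A c) := by
  have h : IsCompact (Set.Icc (0 : ι → ℝ) 1) := isCompact_Icc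
  refine h.of_isClosed_subset ?_ ?_
  · unfold poly
    simp only [Set.setOf_and, Set.setOf_forall]
    refine IsClosed.inter ?_ (IsClosed.inter ?_ (IsClosed.inter ?_ (IsClosed.inter ?_ ?_)))
    · exact isClosed_iInter fun i => isClosed_le (by fun_prop) (by fun_prop)
    · exact isClosed_iInter fun i => isClosed_le (by fun_prop) (by fun_prop)
    · exact isClosed_iInter fun i => isClosed_iInter fun _ =>
        isClosed_eq (by fun_prop) (by fun_prop)
    · exact isClosed_eq (by fun_prop) (by fun_prop)
    · exact isClosed_eq (by fun_prop) (by fun_prop)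
  · intro μ hμ
    exact ⟨fun i => hμ.1 i, fun i => hμ.2.1 i⟩

lemma exists_relation {ι : Type} [Fintype ι] (v : ι → Pl) (F : Finset ι) (hF : 3 < F.card) :
    ∃ w : ι → ℝ, (∀ i, i ∉ F → w i = 0) ∧ (∃ i, w i ≠ 0) ∧ ∑ i, w i = 0 ∧
      ∑ i, w i • v i = 0 := by
  classical
  have hn : ¬ LinearIndependent ℝ (fun i : F => ((v i, 1) : Pl × ℝ)) := by
    intro h
    have := h.fintype_card_le_finrank
    simp at this
    omega
  rw [Fintype.not_linearIndependent_iff] at hn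
  obtain ⟨g, hg, i, hi⟩ := hn
  have key : ∀ {M : Type} [AddCommGroup M] [Module ℝ M] (u : ι → M),
      ∑ j, (if h : j ∈ F then g ⟨j, h⟩ else 0) • u j = ∑ j : F, g j • u j := by
    intro M _ _ u
    rw [← Finset.sum_subset (Finset.subset_univ F), ← Finset.sum_coe_sort F]
    · refine Finset.sum_congr rfl fun j _ => ?_
      simp
    · intro j _ hj
      simp [hj]
  have h1 := congrArg Prod.fst hg
  have h2 := congrArg Prod.snd hg
  simp only [Prod.fst_sum, Prod.snd_sum, Prod.smul_fst, Prod.smul_snd, Prod.fst_zero,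
    Prod.snd_zero] at h1 h2
  refine ⟨fun j => if h : j ∈ F then g ⟨j, h⟩ else 0, ?_, ⟨i, ?_⟩, ?_, ?_⟩
  · intro j hj
    simp [hj]
  · simpa using hi
  · have := key (fun _ => (1 : ℝ))
    rw [h2] at this
    simpa using this
  · rw [key v, h1]

lemma exists_zero {ι : Type} [Fintype ι] (v : ι → Pl) (A : Finset ι) (hA : 3 ≤ A.card)
    (hne : (poly v A ((A.card : ℝ) - 3)).Nonempty) :
    ∃ μ ∈ poly v A ((A.card : ℝ) - 3), ∃ i ∈ A, μ i = 0 := by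
  classical
  obtain ⟨μ, hμ⟩ := (poly_compact v A _).extremePoints_nonempty hne
  have hmem := hμ.1
  refine ⟨μ, hmem, ?_⟩
  obtain ⟨h0, h1, hs, hc, hv⟩ := hmem
  by_contra! hno
  have hpos : ∀ i ∈ A, 0 < μ i := fun i hi => lt_of_le_of_ne (h0 i) (hno i hi).symm
  set F := A.filter (fun i => μ i < 1) with hFdef
  have hsumA : ∑ i ∈ A, μ i = (A.card : ℝ) - 3 := by
    rw [← hc]
    exact Finset.sum_subset (Finset.subset_univ A) (fun i _ hi => hs i hi)
  by_cases hF : 3 < F.card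
  · obtain ⟨w, hw0, ⟨j, hj⟩, hw1, hw2⟩ := exists_relation v F hF
    -- a small step
    have hev : ∀ᶠ e : ℝ in nhds 0, ∀ i ∈ F, 0 < μ i + e * w i ∧ μ i + e * w i < 1 ∧
        0 < μ i - e * w i ∧ μ i - e * w i < 1 := by
      rw [Filter.eventually_all_finset]
      intro i hi
      have hi' := Finset.mem_filter.1 hi
      have p := hpos i hi'.1
      have q := hi'.2
      have c1 : Filter.Tendsto (fun e : ℝ => μ i + e * w i) (nhds 0) (nhds (μ i)) := by
        have : Continuous (fun e : ℝ => μ i + e * w i) := by fun_prop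
        simpa using this.tendsto 0
      have c2 : Filter.Tendsto (fun e : ℝ => μ i - e * w i) (nhds 0) (nhds (μ i)) := by
        have : Continuous (fun e : ℝ => μ i - e * w i) := by fun_prop
        simpa using this.tendsto 0
      exact (c1.eventually_const_lt p).and ((c1.eventually_lt_const q).and
        ((c2.eventually_const_lt p).and (c2.eventually_lt_const q)))
    obtain ⟨e, he, hepos⟩ := ((hev.filter_mono nhdsWithin_le_nhds).and
      (self_mem_nhdsWithin : Set.Ioi (0:ℝ) ∈ nhdsWithin 0 (Set.Ioi 0))).exists
    have hepos : 0 < e := hepos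
    have hin : ∀ s : ℝ, (∀ i ∈ F, 0 < μ i + s * w i ∧ μ i + s * w i < 1) →
        (fun i => μ i + s * w i) ∈ poly v A ((A.card : ℝ) - 3) := by
      intro s hsF
      refine ⟨fun i => ?_, fun i => ?_, fun i hi => ?_, ?_, ?_⟩
      · by_cases hi : i ∈ F
        · exact (hsF i hi).1.le
        · simpa [hw0 i hi] using h0 i
      · by_cases hi : i ∈ F
        · exact (hsF i hi).2.le
        · simpa [hw0 i hi] using h1 i
      · have : i ∉ F := fun h => hi (Finset.mem_filter.1 h).1
        simp [hw0 i this, hs i hi]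
      · rw [Finset.sum_add_distrib, ← Finset.mul_sum, hw1, hc]; simp
      · simp only [add_smul, mul_smul]
        rw [Finset.sum_add_distrib, ← Finset.smul_sum, hw2, hv]; simp
    have ha := hin e (fun i hi => ⟨(he i hi).1, (he i hi).2.1⟩)
    have hb := hin (-e) (fun i hi => by
      have := he i hi
      constructor <;> linarith [this.2.2.1, this.2.2.2])
    have hseg : μ ∈ openSegment ℝ (fun i => μ i + e * w i) (fun i => μ i + -e * w i) := by
      refine ⟨1/2, 1/2, by norm_num, by norm_num, by norm_num, ?_⟩
      ext i
      simp
      ring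
    have := hμ.2 ha hb hseg
    have hj' := congrFun this j
    simp at hj'
    rcases hj' with h | h
    · exact hepos.ne' h
    · exact hj h
  · have hFs : F ⊆ A := Finset.filter_subset _ _
    have hsplit := Finset.sum_sdiff (f := μ) hFs
    have hone : ∑ i ∈ A \ F, μ i = ((A \ F).card : ℝ) := by
      rw [Finset.sum_congr rfl (g := fun _ => (1:ℝ))]
      · simp
      · intro i hi
        rw [Finset.mem_sdiff, hFdef, Finset.mem_filter] at hi
        have := h1 i
        by_contra hne
        exact hi.2 ⟨hi.1, lt_of_le_of_ne this hne⟩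
    have hcard : ((A \ F).card : ℝ) + F.card = A.card := by
      exact_mod_cast Finset.card_sdiff_add_card_eq_card hFs
    have hF3 : (F.card : ℝ) ≤ 3 := by exact_mod_cast not_lt.1 hF
    have hFn : F.Nonempty := by
      rw [Finset.nonempty_iff_ne_empty]
      intro h
      rw [h] at hcard hsplit hone
      simp at hcard hsplit hone
      linarith
    have : 0 < ∑ i ∈ F, μ i := Finset.sum_pos (fun i hi => hpos i (hFs hi)) hFn
    linarith

def good {ι : Type} [Fintype ι] (v : ι → Pl) (A : Finset ι) : Prop :=
  A.card ≤ 2 ∨ (poly v A ((A.card : ℝ) - 2)).Nonempty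

lemma good_norm {ι : Type} [Fintype ι] (v : ι → Pl) (hv : ∀ i, ‖v i‖ ≤ 1) (A : Finset ι)
    (h : good v A) : ‖∑ i ∈ A, v i‖ ≤ 2 := by
  classical
  rcases h with h | ⟨μ, h0, h1, hs, hc, hz⟩
  · calc ‖∑ i ∈ A, v i‖ ≤ ∑ i ∈ A, (1:ℝ) := norm_sum_le_of_le _ (fun i _ => hv i)
      _ = A.card := by simp
      _ ≤ 2 := by exact_mod_cast h
  · have e1 : ∑ i ∈ A, μ i = (A.card : ℝ) - 2 := by
      rw [← hc]
      exact Finset.sum_subset (Finset.subset_univ A) (fun i _ hi => hs i hi)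
    have e2 : ∑ i ∈ A, μ i • v i = 0 := by
      rw [← hz]
      exact Finset.sum_subset (Finset.subset_univ A) (fun i _ hi => by simp [hs i hi])
    have e3 : ∑ i ∈ A, v i = ∑ i ∈ A, (1 - μ i) • v i := by
      simp [sub_smul, e2]
    rw [e3]
    calc ‖∑ i ∈ A, (1 - μ i) • v i‖ ≤ ∑ i ∈ A, (1 - μ i) := by
          refine norm_sum_le_of_le _ (fun i _ => ?_)
          have : 0 ≤ 1 - μ i := by linarith [h1 i]
          rw [norm_smul, Real.norm_of_nonneg this]
          exact mul_le_of_le_one_right this (hv i)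
      _ = 2 := by simp [e1]

lemma good_step {ι : Type} [Fintype ι] [DecidableEq ι] (v : ι → Pl) (A : Finset ι)
    (hne : A.Nonempty) (h : good v A) : ∃ i ∈ A, good v (A.erase i) := by
  by_cases hA : A.card ≤ 2
  · obtain ⟨i, hi⟩ := hne
    exact ⟨i, hi, Or.inl ((Finset.card_erase_le).trans hA)⟩
  have hA3 : 3 ≤ A.card := by omega
  obtain ⟨μ, h0, h1, hs, hc, hz⟩ := h.resolve_left hA
  have hr : (3 : ℝ) ≤ A.card := by exact_mod_cast hA3
  have hp : (0 : ℝ) < (A.card : ℝ) - 2 := by linarith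
  set t : ℝ := ((A.card : ℝ) - 3) / ((A.card : ℝ) - 2) with ht
  have ht0 : 0 ≤ t := div_nonneg (by linarith) hp.le
  have ht1 : t ≤ 1 := by rw [ht, div_le_one hp]; linarith
  obtain ⟨ν, ⟨g0, g1, gs, gc, gz⟩, i, hi, hi0⟩ := exists_zero v A hA3
    ⟨fun i => t * μ i, fun i => mul_nonneg ht0 (h0 i), fun i => mul_le_one₀ ht1 (h0 i) (h1 i),
      fun i hi => by simp [hs i hi],
      by rw [← Finset.mul_sum, hc, ht]; field_simp,
      by simp only [mul_smul]; rw [← Finset.smul_sum, hz, smul_zero]⟩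
  refine ⟨i, hi, Or.inr ⟨ν, g0, g1, fun j hj => ?_, ?_, gz⟩⟩
  · by_cases hji : j = i
    · rw [hji, hi0]
    · exact gs j (fun h => hj (Finset.mem_erase.2 ⟨hji, h⟩))
  · rw [gc, Finset.card_erase_of_mem hi, Nat.cast_sub (by omega)]
    push_cast
    ring

lemma enum {ι : Type} [Fintype ι] [DecidableEq ι] [Inhabited ι] (v : ι → Pl)
    (hv : ∀ i, ‖v i‖ ≤ 1) (k : ℕ) : ∀ A : Finset ι, A.card = k → good v A →
    ∃ f : ℕ → ι, (Finset.range k).image f = A ∧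
      ∀ p ≤ k, ‖∑ j ∈ Finset.range p, v (f j)‖ ≤ 2 := by
  induction k with
  | zero =>
    intro A hA _
    refine ⟨fun _ => default, ?_, ?_⟩
    · simp [Finset.card_eq_zero.1 hA]
    · intro p hp
      simp [Nat.le_zero.1 hp]
  | succ k ih =>
    intro A hA hg
    obtain ⟨i, hi, hgi⟩ := good_step v A (Finset.card_pos.1 (by omega)) hg
    obtain ⟨f, hf, hb⟩ := ih (A.erase i) (by rw [Finset.card_erase_of_mem hi]; omega) hgi
    have himg : (Finset.range (k+1)).image (Function.update f k i) = A := by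
      rw [Finset.range_add_one, Finset.image_insert, Function.update_self]
      have : (Finset.range k).image (Function.update f k i) = (Finset.range k).image f := by
        refine Finset.image_congr fun j hj => ?_
        have : j < k := by simpa using hj
        exact Function.update_of_ne this.ne _ _
      rw [this, hf, Finset.insert_erase hi]
    refine ⟨Function.update f k i, himg, fun p hp => ?_⟩
    rcases Nat.lt_or_ge p (k+1) with h | h
    · rw [Finset.sum_congr rfl (g := fun j => v (f j))]
      · exact hb p (by omega)
      · intro j hj
        have : j ≠ k := by have := Finset.mem_range.1 hj; omega
        rw [Function.update_of_ne this]
    · have hpk : p = k + 1 := le_antisymm hp h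
      have hinj : Set.InjOn (Function.update f k i) (Finset.range (k+1)) := by
        rw [← Finset.card_image_iff, himg, hA, Finset.card_range]
      have := good_norm v hv A hg
      rw [← himg, Finset.sum_image hinj] at this
      rw [hpk]
      exact this

end SteinitzAux

open SteinitzAux in
/-- **Steinitz theorem in dimension 2.** Vectors `v₁, …, vₙ` in `ℝ²` of norm at most 1
summing to zero can be reordered so that every partial sum has norm at most 2. -/
theorem steinitz_dim_two (n : ℕ) (v : Fin n → EuclideanSpace ℝ (Fin 2))
    (hv : ∀ i, ‖v i‖ ≤ 1) (hsum : ∑ i, v i = 0) :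
    ∃ σ : Equiv.Perm (Fin n), ∀ p : ℕ, 1 ≤ p → p ≤ n →
      ‖∑ k ∈ Finset.univ.filter (fun k : Fin n => (k : ℕ) < p), v (σ k)‖ ≤ 2 := by
  rcases Nat.eq_zero_or_pos n with hn | hn
  · refine ⟨1, fun p h1 h2 => ?_⟩
    omega
  haveI : Inhabited (Fin n) := ⟨⟨0, hn⟩⟩
  have hg : good v Finset.univ := by
    by_cases h2 : n ≤ 2
    · exact Or.inl (by simpa using h2)
    · right
      have hr : (2 : ℝ) ≤ n := by exact_mod_cast (by omega : 2 ≤ n)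
      have hp : (0 : ℝ) < n := by linarith
      refine ⟨fun _ => ((n : ℝ) - 2) / n, fun _ => div_nonneg (by linarith) hp.le,
        fun _ => ?_, fun i hi => absurd (Finset.mem_univ i) hi, ?_, ?_⟩
      · show ((n : ℝ) - 2) / n ≤ 1
        rw [div_le_one hp]; linarith
      · simp
        field_simp
      · rw [← Finset.smul_sum, hsum, smul_zero]
  obtain ⟨f, hf, hb⟩ := enum v hv n Finset.univ (by simp) hg
  have hinj : Set.InjOn f (Finset.range n) := by
    rw [← Finset.card_image_iff, hf]; simp
  have hinj' : Function.Injective (fun k : Fin n => f k) := by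
    intro a b hab
    exact Fin.ext (hinj (by simp) (by simp) hab)
  refine ⟨Equiv.ofBijective _ (Finite.injective_iff_bijective.1 hinj'), fun p _ hp => ?_⟩
  have := hb p hp
  convert this using 2
  refine Finset.sum_bij (fun k _ => (k : ℕ)) ?_ ?_ ?_ ?_
  · intro a ha
    simpa using ha
  · intro a _ b _ h
    exact Fin.ext h
  · intro b hb
    have hb' := Finset.mem_range.1 hb
    exact ⟨⟨b, by omega⟩, by simpa using hb', rfl⟩
  · intro a _
    rfl
end

section
/- Let v_1, …, v_n be vectors in ℝ² with ‖v_i‖ ≤ 1 for every i and with Σ_{i=1}^n v_i = 0. Then there exists a permutation σ of {1,…,n} such that for every p ∈ {1,…,n} the partial sum S_p = Σ_{k=1}^p v_{σ(k)} satisfies ‖S_p‖² ≤ p. -/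
lemma steinitz_aux (n : ℕ) (v : Fin n → EuclideanSpace ℝ (Fin 2))
    (hv : ∀ i, ‖v i‖ ≤ 1) (hsum : ∑ i, v i = 0) (m : ℕ) (hm : m ≤ n) :
    ∃ σ : Equiv.Perm (Fin n), ∀ p : ℕ, p ≤ m →
      ‖∑ k ∈ Finset.univ.filter (fun k : Fin n => (k : ℕ) < p), v (σ k)‖ ^ 2 ≤ (p : ℝ) := by
  induction m with
  | zero =>
    refine ⟨1, fun p hp => ?_⟩
    obtain rfl : p = 0 := by omega
    simp
  | succ m ih =>
    obtain ⟨σ, hσ⟩ := ih (by omega)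
    set S := ∑ k ∈ Finset.univ.filter (fun k : Fin n => (k : ℕ) < m), v (σ k) with hS
    have htot : S + ∑ k ∈ Finset.univ.filter (fun k : Fin n => ¬ (k : ℕ) < m), v (σ k) = 0 := by
      rw [hS, Finset.sum_filter_add_sum_filter_not, Equiv.sum_comp σ v, hsum]
    have hex : ∃ k ∈ Finset.univ.filter (fun k : Fin n => ¬ (k : ℕ) < m),
        inner ℝ S (v (σ k)) ≤ (0 : ℝ) := by
      apply Finset.exists_le_of_sum_le (f := fun k => inner ℝ S (v (σ k))) (g := fun _ => (0 : ℝ))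
      · exact ⟨⟨m, by omega⟩, by simp⟩
      · rw [← inner_sum, eq_neg_of_add_eq_zero_right htot, inner_neg_right,
          real_inner_self_eq_norm_sq]
        simp
    obtain ⟨k0, hk0, hin⟩ := hex
    simp only [Finset.mem_filter, Finset.mem_univ, true_and, not_lt] at hk0
    let M : Fin n := ⟨m, by omega⟩
    have hM : (M : ℕ) = m := rfl
    have key : ∀ p ≤ m, ∑ k ∈ Finset.univ.filter (fun k : Fin n => (k : ℕ) < p),
        v (((Equiv.swap M k0).trans σ) k)
        = ∑ k ∈ Finset.univ.filter (fun k : Fin n => (k : ℕ) < p), v (σ k) := by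
      intro p hp
      refine Finset.sum_congr rfl fun k hk => ?_
      simp only [Finset.mem_filter, Finset.mem_univ, true_and] at hk
      rw [Equiv.trans_apply, Equiv.swap_apply_of_ne_of_ne]
      · rintro rfl; omega
      · rintro rfl; omega
    refine ⟨(Equiv.swap M k0).trans σ, fun p hp => ?_⟩
    rcases Nat.lt_or_ge m p with h | h
    · obtain rfl : p = m + 1 := by omega
      have hf : Finset.univ.filter (fun k : Fin n => (k : ℕ) < m + 1)
          = insert M (Finset.univ.filter (fun k : Fin n => (k : ℕ) < m)) := by
        ext k
        simp only [Finset.mem_filter, Finset.mem_univ, true_and, Finset.mem_insert, Fin.ext_iff, hM]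
        omega
      rw [hf, Finset.sum_insert (by simp [hM]), key m le_rfl, ← hS, Equiv.trans_apply,
        Equiv.swap_apply_left, add_comm, norm_add_sq_real]
      have h1 := hσ m le_rfl
      have h2 := hv (σ k0)
      have h3 := norm_nonneg (v (σ k0))
      push_cast
      nlinarith
    · rw [key p h]
      exact hσ p h

/-- **Quantitative Steinitz increment bound.** Vectors `v₁, …, vₙ` in `ℝ²` of norm at
most 1 summing to zero can be reordered so that every partial sum `S_p` satisfies
`‖S_p‖² ≤ p`. -/
theorem steinitz_dim_two_sq_bound (n : ℕ) (v : Fin n → EuclideanSpace ℝ (Fin 2))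
    (hv : ∀ i, ‖v i‖ ≤ 1) (hsum : ∑ i, v i = 0) :
    ∃ σ : Equiv.Perm (Fin n), ∀ p : ℕ, 1 ≤ p → p ≤ n →
      ‖∑ k ∈ Finset.univ.filter (fun k : Fin n => (k : ℕ) < p), v (σ k)‖ ^ 2 ≤ (p : ℝ) := by
  obtain ⟨σ, h⟩ := steinitz_aux n v hv hsum n le_rfl
  exact ⟨σ, fun p _ hp => h p hp⟩
end
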